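/- Let S be a countable set partitioned as S = ∪_{n≥M} S_n with each S_n finite, ω: S → ℝ with n ≤ ω(x) ≤ n+1 on S_n, λ > 1, and suppose there is h ≥ 0 so that for every ε > 0, eventually e^{n(h−ε)} ≤ #S_n ≤ e^{n(h+ε)}. Let 𝔇 be the diagonal operator on ℓ²(S) with 𝔇δ_x = λ^{ω(x)}δ_x, and a: S → (0,∞) a function bounded above and bounded below away from 0. Then inf{s > 0 : Σ_{x∈S} a(x)(1+λ^{2ω(x)})^{-s/2} < ∞} = h/log(λ). -/

import Mathlib

open Filter in
/-- If the fibres of `shell` are finite, vanish below `M` and grow at most like `e^{nu}`, then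
`e^{-t · shell}` is summable for every `t > u`. -/
theorem summable_exp_neg_mul_of_ncard_fiber_le {S : Type*} {M N : ℤ} {shell : S → ℤ} {t u : ℝ}
    (hM : ∀ x, M ≤ shell x) (hfin : ∀ n : ℤ, {x : S | shell x = n}.Finite)
    (hN : ∀ n : ℤ, N ≤ n → ({x : S | shell x = n}.ncard : ℝ) ≤ Real.exp (n * u)) (hut : u < t) :
    Summable fun x : S => Real.exp (-t * shell x) := by
  rw [← (Equiv.sigmaFiberEquiv shell).summable_iff]
  refine (summable_sigma_of_nonneg fun _ => (Real.exp_pos _).le).2 ?_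
  have hfib (n : ℤ) : Finite {x : S // shell x = n} := (hfin n).to_subtype
  refine ⟨fun n => Summable.of_finite, ?_⟩
  have htsum (n : ℤ) : ∑' x : {x : S // shell x = n},
      ((fun x : S => Real.exp (-t * shell x)) ∘ Equiv.sigmaFiberEquiv shell) ⟨n, x⟩ =
      ({x : S | shell x = n}.ncard : ℝ) * Real.exp (-t * n) := by
    have hconst (x : {x : S // shell x = n}) :
        ((fun x : S => Real.exp (-t * shell x)) ∘ Equiv.sigmaFiberEquiv shell) ⟨n, x⟩ =
        Real.exp (-t * n) := by
      simp [Equiv.sigmaFiberEquiv, x.2]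
    rw [tsum_congr hconst, tsum_const, nsmul_eq_mul]
    rfl
  refine (summable_congr htsum).2 ?_
  have hgeom : Summable fun n : ℕ => Real.exp (n * (u - t)) :=
    Real.summable_exp_nat_mul_iff.2 (by linarith)
  refine Summable.of_nat_of_neg_add_one ?_ ?_
  · refine Summable.of_norm_bounded_eventually_nat hgeom ?_
    filter_upwards [eventually_ge_atTop N.toNat] with n hn
    rw [Real.norm_of_nonneg (by positivity)]
    calc _ ≤ Real.exp (((n : ℤ) : ℝ) * u) * Real.exp (-t * ((n : ℤ) : ℝ)) := by
          gcongr
          exact hN n (by omega)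
      _ = Real.exp (n * (u - t)) := by
          rw [← Real.exp_add]
          push_cast
          ring_nf
  · refine Summable.of_norm_bounded_eventually_nat hgeom ?_
    filter_upwards [eventually_ge_atTop (-M).toNat] with n hn
    have hempty : {x : S | shell x = -((n : ℤ) + 1)} = ∅ := by
      ext x
      have := hM x
      simp only [Set.mem_ofPred_eq, Set.mem_empty_iff_false, iff_false]
      omega
    rw [hempty, Set.ncard_empty, Nat.cast_zero, zero_mul, norm_zero]
    positivity

/-- Comparison of `(1 + l^{2w})^{-s/2}` with the exponential `l^{-sn}` for `w ≥ n`. -/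
theorem one_add_rpow_rpow_neg_le {l s w n : ℝ} (hl : 1 < l) (hs : 0 ≤ s) (hw : n ≤ w) :
    (1 + l ^ (2 * w)) ^ (-(s / 2)) ≤ Real.exp (-(s * Real.log l) * n) := by
  have hl0 : 0 < l := by linarith
  have hlog := Real.log_pos hl
  calc (1 + l ^ (2 * w)) ^ (-(s / 2)) ≤ (l ^ (2 * n)) ^ (-(s / 2)) := by
        refine Real.rpow_le_rpow_of_nonpos (by positivity) ?_ (by linarith)
        have := Real.rpow_le_rpow_of_exponent_le hl.le (show 2 * n ≤ 2 * w by linarith)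
        linarith
    _ = Real.exp (-(s * Real.log l) * n) := by
        rw [← Real.rpow_mul hl0.le, Real.rpow_def_of_pos hl0]
        ring_nf

/-- Comparison of `(1 + l^{2w})^{-s/2}` with the exponential `l^{-sn}` for `w ≤ n`, `0 ≤ n`. -/
theorem two_rpow_mul_exp_le_one_add_rpow_rpow_neg {l s w n : ℝ} (hl : 1 < l) (hs : 0 ≤ s)
    (hn : 0 ≤ n) (hw : w ≤ n) :
    2 ^ (-(s / 2)) * Real.exp (-(s * Real.log l) * n) ≤ (1 + l ^ (2 * w)) ^ (-(s / 2)) := by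
  have hl0 : 0 < l := by linarith
  calc (2 : ℝ) ^ (-(s / 2)) * Real.exp (-(s * Real.log l) * n)
      = (2 * l ^ (2 * n)) ^ (-(s / 2)) := by
        rw [Real.mul_rpow (by norm_num) (by positivity), ← Real.rpow_mul hl0.le,
          Real.rpow_def_of_pos hl0]
        ring_nf
    _ ≤ (1 + l ^ (2 * w)) ^ (-(s / 2)) := by
        refine Real.rpow_le_rpow_of_nonpos (by positivity) ?_ (by linarith)
        have h₁ := Real.rpow_le_rpow_of_exponent_le hl.le (show 2 * w ≤ 2 * n by linarith)
        have h₂ := Real.one_le_rpow hl.le (show 0 ≤ 2 * n by linarith)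
        linarith


/-- Spectral dimension of the Dirac operator `𝔇 δ_x = λ^{ω(x)} δ_x`: with `S` countable
partitioned into finite shells `S_n` (`n ≥ M`), `n ≤ ω ≤ n+1` on `S_n`, `λ > 1`, and
shell counts satisfying `e^{n(h−ε)} ≤ #S_n ≤ e^{n(h+ε)}` eventually for every `ε > 0`,
and `a : S → (0,∞)` bounded above and below away from zero, one has
`inf{s > 0 : Σ_x a(x)(1+λ^{2ω(x)})^{-s/2} < ∞} = h / log λ`. -/
theorem spectral_dimension_is_entropy {S : Type*} [Countable S]
    (M : ℤ) (shell : S → ℤ) (hshell_ge : ∀ x : S, M ≤ shell x)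
    (hfin : ∀ n : ℤ, {x : S | shell x = n}.Finite)
    (ω : S → ℝ) (hω : ∀ x : S, (shell x : ℝ) ≤ ω x ∧ ω x ≤ shell x + 1)
    (l : ℝ) (hl : 1 < l) (h : ℝ) (hh : 0 ≤ h)
    (hcount : ∀ ε : ℝ, 0 < ε → ∃ N : ℤ, ∀ n : ℤ, N ≤ n →
      Real.exp (n * (h - ε)) ≤ ({x : S | shell x = n}.ncard : ℝ) ∧
      ({x : S | shell x = n}.ncard : ℝ) ≤ Real.exp (n * (h + ε)))
    (a : S → ℝ) (c C : ℝ) (hc : 0 < c)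
    (ha : ∀ x : S, c ≤ a x ∧ a x ≤ C) :
    sInf {s : ℝ | 0 < s ∧
        Summable fun x : S => a x * (1 + l ^ (2 * ω x)) ^ (-(s / 2))}
      = h / Real.log l := by
  have hlog := Real.log_pos hl
  have hl0 : 0 < l := by linarith
  have hsum (s : ℝ) (hs : h / Real.log l < s) :
      0 < s ∧ Summable fun x : S => a x * (1 + l ^ (2 * ω x)) ^ (-(s / 2)) := by
    have hs0 : 0 < s := (div_nonneg hh hlog.le).trans_lt hs
    rw [div_lt_iff₀ hlog] at hs
    obtain ⟨N, hN⟩ := hcount ((s * Real.log l - h) / 2) (by linarith)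
    have hexp := summable_exp_neg_mul_of_ncard_fiber_le hshell_ge hfin
      (fun n hn => (hN n hn).2) (show h + (s * Real.log l - h) / 2 < s * Real.log l by linarith)
    refine ⟨hs0, Summable.of_nonneg_of_le (fun x => ?_) (fun x => ?_) (hexp.mul_left C)⟩
    · exact mul_nonneg (hc.le.trans (ha x).1) (by positivity)
    · exact mul_le_mul (ha x).2 (one_add_rpow_rpow_neg_le hl hs0.le (hω x).1) (by positivity)
        (hc.le.trans ((ha x).1.trans (ha x).2))
  refine csInf_eq_of_forall_ge_of_forall_gt_exists_lt ⟨_, hsum _ (lt_add_one _)⟩ ?_ ?_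
  · rintro s ⟨hs0, hs⟩
    by_contra! hlt
    rw [lt_div_iff₀ hlog] at hlt
    set ε := (h - s * Real.log l) / 2 with hε
    have hε0 : 0 < ε := by linarith
    obtain ⟨N, hN⟩ := hcount ε hε0
    set T := ∑' x : S, a x * (1 + l ^ (2 * ω x)) ^ (-(s / 2))
    set K := c * (2 ^ (-(s / 2)) * Real.exp (-(s * Real.log l))) with hK
    have hK0 : 0 < K := by positivity
    have hbound (n : ℕ) (hn : N ≤ n) : K * Real.exp (n * ε) ≤ T := by
      have hterm (x : S) (hx : x ∈ (hfin n).toFinset) :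
          K * Real.exp (-(s * Real.log l) * n) ≤ a x * (1 + l ^ (2 * ω x)) ^ (-(s / 2)) := by
        have hx' : shell x = n := by simpa using hx
        have hωx : ω x ≤ (n : ℝ) + 1 := by simpa [hx'] using (hω x).2
        have hle := two_rpow_mul_exp_le_one_add_rpow_rpow_neg hl hs0.le (by positivity) hωx
        calc K * Real.exp (-(s * Real.log l) * n)
            = c * (2 ^ (-(s / 2)) * Real.exp (-(s * Real.log l) * (n + 1))) := by
              rw [hK, mul_add, mul_one, Real.exp_add]
              ring
          _ ≤ a x * (1 + l ^ (2 * ω x)) ^ (-(s / 2)) :=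
              mul_le_mul (ha x).1 hle (by positivity) (hc.le.trans (ha x).1)
      calc K * Real.exp (n * ε)
          = Real.exp (((n : ℤ) : ℝ) * (h - ε)) * (K * Real.exp (-(s * Real.log l) * n)) := by
            rw [mul_left_comm, ← Real.exp_add, hε]
            push_cast
            ring_nf
        _ ≤ ({x : S | shell x = n}.ncard : ℝ) * (K * Real.exp (-(s * Real.log l) * n)) := by
            gcongr
            exact (hN n hn).1
        _ = (hfin n).toFinset.card • (K * Real.exp (-(s * Real.log l) * n)) := by
            rw [Set.ncard_eq_toFinset_card _ (hfin n), nsmul_eq_mul]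
        _ ≤ ∑ x ∈ (hfin n).toFinset, a x * (1 + l ^ (2 * ω x)) ^ (-(s / 2)) :=
            Finset.card_nsmul_le_sum _ _ _ hterm
        _ ≤ T := hs.sum_le_tsum _ fun x _ =>
            mul_nonneg (hc.le.trans (ha x).1) (by positivity)
    have htop : Filter.Tendsto (fun n : ℕ => K * Real.exp (n * ε)) Filter.atTop Filter.atTop :=
      (Real.tendsto_exp_atTop.comp
        (tendsto_natCast_atTop_atTop.atTop_mul_const hε0)).const_mul_atTop hK0
    obtain ⟨n, hn, hnT⟩ := ((Filter.eventually_ge_atTop N.toNat).and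
      (htop.eventually_gt_atTop T)).exists
    exact (hbound n (by omega)).not_gt hnT
  · intro w hw
    obtain ⟨s, hs, hsw⟩ := exists_between hw
    exact ⟨s, hsum s hs, hsw⟩
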